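/- arXiv:1612.09097 — 5 statements merged into one kernel-verified Lean document; each statement's English description precedes it below -/
import Mathlib

section
/- Let V be a real inner product space with inner product ⟨·,·⟩, and let a : V × V → ℝ be a symmetric bilinear form. Suppose u, uʰ ∈ V and λ, λʰ ∈ ℝ satisfy: a(w, u) = λ⟨w, u⟩ for all w ∈ V; ⟨u, u⟩ = 1; ⟨uʰ, uʰ⟩ = 1; and a(uʰ, uʰ) = λʰ. Then the Pythagorean eigenvalue identity holds: a(u − uʰ, u − uʰ) = λ·⟨u − uʰ, u − uʰ⟩ + λʰ − λ. -/
open RealInnerProductSpace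

/-! The eigenvalue equation says that `u` lies in the radical of the shifted form `a - λ m`, where
`m` is the inner product. A symmetric form is unchanged by adding radical vectors to its arguments,
so the shifted form takes the same value on `u - w` as on `w`; this equality is the identity. -/

theorem apply_sub_sub_eq_of_mem_ker {R₁ R M₁ M : Type*} [CommSemiring R₁] [CommSemiring R]
    [AddCommGroup M₁] [Module R₁ M₁] [AddCommGroup M] [Module R M] {I₁ I₂ : R₁ →+* R}
    {B : M₁ →ₛₗ[I₁] M₁ →ₛₗ[I₂] M} (hB : B.IsRefl) {u : M₁} (hu : u ∈ LinearMap.ker B) (w : M₁) :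
    B (u - w) (u - w) = B w w := by
  have left_zero : B u = 0 := hu
  have right_zero : B w u = 0 := hB u w (LinearMap.congr_fun left_zero w)
  calc
    B (u - w) (u - w) = -B w (u - w) := by rw [map_sub B, left_zero, zero_sub, LinearMap.neg_apply]
    _ = B w w := by rw [map_sub, right_zero, zero_sub, neg_neg]

section Hermitian

variable {R M : Type*} [CommRing R] [AddCommGroup M] [Module R M] {σ : R →+* R}
  {a m : M →ₛₗ[σ] M →ₗ[R] R} {lam : R} {u : M}

theorem isSymm_sub_smul (ha : a.IsSymm) (hm : m.IsSymm) (hlam : σ lam = lam) :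
    (a - lam • m).IsSymm where
  eq x y := by
    simp only [LinearMap.sub_apply, LinearMap.smul_apply, smul_eq_mul, map_sub, map_mul, ha.eq,
      hm.eq, hlam]

theorem mem_ker_sub_smul_of_forall_apply_eq (ha : a.IsSymm) (hm : m.IsSymm) (hlam : σ lam = lam)
    (heig : ∀ w, a w u = lam * m w u) : u ∈ LinearMap.ker (a - lam • m) := by
  refine LinearMap.mem_ker.mpr (LinearMap.ext fun w ↦ ?_)
  refine (isSymm_sub_smul ha hm hlam).isRefl w u ?_
  simp only [LinearMap.sub_apply, LinearMap.smul_apply, smul_eq_mul, heig, sub_self]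

/-- For a discrete eigenvector `w` with `m w w = 1`, the term `a w w - lam * m w w` is the
eigenvalue error. -/
theorem pythagorean_eigenvalue_theorem_general (ha : a.IsSymm) (hm : m.IsSymm)
    (hlam : σ lam = lam) (heig : ∀ w, a w u = lam * m w u) (w : M) :
    a (u - w) (u - w) = lam * m (u - w) (u - w) + a w w - lam * m w w := by
  have shifted : (a - lam • m) (u - w) (u - w) = (a - lam • m) w w :=
    apply_sub_sub_eq_of_mem_ker (isSymm_sub_smul ha hm hlam).isRefl
      (mem_ker_sub_smul_of_forall_apply_eq ha hm hlam heig) w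
  simp only [LinearMap.sub_apply, LinearMap.smul_apply, smul_eq_mul] at shifted
  linear_combination shifted

end Hermitian

/-- **Pythagorean eigenvalue theorem** (Strang–Fix) for a consistent Galerkin
discretization: if `(lam, u)` is an exact eigenpair of the symmetric bilinear
form `a` relative to the inner product, normalized in the `L²`-type norm, and
`(lamh, uh)` is a discrete eigenpair also normalized, then the squared
energy-norm error equals the scaled squared `L²`-error plus the eigenvalue error. -/
theorem pythagorean_eigenvalue_theorem
    {V : Type*} [NormedAddCommGroup V] [InnerProductSpace ℝ V]
    (a : LinearMap.BilinForm ℝ V) (hsym : ∀ x y : V, a x y = a y x)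
    (u uh : V) (lam lamh : ℝ)
    (heig : ∀ w : V, a w u = lam * ⟪w, u⟫)
    (hnorm : ⟪u, u⟫ = 1)
    (hnormh : ⟪uh, uh⟫ = 1)
    (hdisc : a uh uh = lamh) :
    a (u - uh) (u - uh) = lam * ⟪u - uh, u - uh⟫ + lamh - lam := by
  simpa only [innerₗ_apply_apply, hnormh, hdisc, mul_one] using
    pythagorean_eigenvalue_theorem_general ⟨hsym⟩ (isSymm_inner (E := V)) rfl heig uh
end

section
/- Let V be a real inner product space with inner product ⟨·,·⟩, and let a, a_h, b_h : V × V → ℝ be symmetric bilinear forms. Suppose u, v ∈ V and λ, μ ∈ ℝ satisfy: a(w, u) = λ⟨w, u⟩ for all w ∈ V; ⟨u, u⟩ = 1; b_h(v, v) = 1; and a_h(v, v) = μ·b_h(v, v). Then the generalized Pythagorean eigenvalue identity holds: a(u − v, u − v) = μ − λ + λ·⟨u − v, u − v⟩ + (a(v, v) − a_h(v, v)) + λ·(b_h(v, v) − ⟨v, v⟩). -/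
open RealInnerProductSpace

/-!
An eigenvector `u` of the pair `(a, b)` with eigenvalue `lam` lies in the kernel of the shifted form
`a - lam • b`. Translating by `u` therefore leaves the quadratic form of `a - lam • b` unchanged, so
at `u - v` it takes the value it takes at `v`. The discrete eigenpair and its normalization then
rewrite this value in terms of `ah` and `bh`.
-/

section BilinForm

open LinearMap (BilinForm)

variable {R M : Type*} [CommRing R] [AddCommGroup M] [Module R M]

theorem bilinForm_sub_apply_self_of_isRefl {B : BilinForm R M} (hB : B.IsRefl) {u : M}
    (hu : ∀ w : M, B w u = 0) (v : M) : B (u - v) (u - v) = B v v := by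
  have hu_left : B u v = 0 := hB.eq_zero (hu v)
  simp only [map_sub, LinearMap.sub_apply, hu, hu_left, sub_zero, zero_sub, neg_neg]

theorem bilinForm_sub_apply_self_of_eigenvector {a b : BilinForm R M} (ha : a.IsSymm)
    (hb : b.IsSymm) {u : M} {lam : R} (heig : ∀ w : M, a w u = lam * b w u) (v : M) :
    a (u - v) (u - v) = lam * b (u - v) (u - v) + (a v v - lam * b v v) := by
  have hker (w : M) : (a - lam • b) w u = 0 := sub_eq_zero.mpr (heig w)
  have hshift : a (u - v) (u - v) - lam * b (u - v) (u - v) = a v v - lam * b v v :=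
    bilinForm_sub_apply_self_of_isRefl (ha.sub (hb.smul lam)).isRefl hker v
  exact sub_eq_iff_eq_add'.mp hshift

theorem generalized_pythagorean_eigenvalue_theorem_general {a b : BilinForm R M}
    (ha : a.IsSymm) (hb : b.IsSymm) (ah bh : BilinForm R M) {u v : M} {lam mu : R}
    (heig : ∀ w : M, a w u = lam * b w u) (hnormh : bh v v = 1) (hdisc : ah v v = mu * bh v v) :
    a (u - v) (u - v)
      = mu - lam + lam * b (u - v) (u - v) + (a v v - ah v v) + lam * (bh v v - b v v) := by
  have hmu : ah v v = mu := by rw [hdisc, hnormh, mul_one]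
  rw [bilinForm_sub_apply_self_of_eigenvector ha hb heig v, hmu, hnormh]
  ring

end BilinForm

/-- **Generalized Pythagorean eigenvalue theorem** for weak forms with modified
(inexactly integrated) inner products: `a` is the exact energy inner product,
`⟪·,·⟫` the exact `L²`-type inner product, `ah` and `bh` the modified energy and
`L²` inner products, `(lam, u)` an exact eigenpair with `⟪u,u⟫ = 1`, and
`(mu, v)` a discrete eigenpair of the modified problem with `bh v v = 1`. -/
theorem generalized_pythagorean_eigenvalue_theorem
    {V : Type*} [NormedAddCommGroup V] [InnerProductSpace ℝ V]
    (a ah bh : LinearMap.BilinForm ℝ V)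
    (hasym : ∀ x y : V, a x y = a y x)
    (hahsym : ∀ x y : V, ah x y = ah y x)
    (hbhsym : ∀ x y : V, bh x y = bh y x)
    (u v : V) (lam mu : ℝ)
    (heig : ∀ w : V, a w u = lam * ⟪w, u⟫)
    (hnorm : ⟪u, u⟫ = 1)
    (hnormh : bh v v = 1)
    (hdisc : ah v v = mu * bh v v) :
    a (u - v) (u - v)
      = mu - lam + lam * ⟪u - v, u - v⟫ + (a v v - ah v v)
        + lam * (bh v v - ⟪v, v⟫) :=
  generalized_pythagorean_eigenvalue_theorem_general (b := innerₗ V) ⟨hasym⟩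
    ⟨fun x y ↦ real_inner_comm y x⟩ ah bh heig hnormh hdisc
end

section
/- Let V be a real inner product space with inner product ⟨·,·⟩, and let a, a_h, b_h : V × V → ℝ be symmetric bilinear forms. Suppose u, v ∈ V and λ, μ ∈ ℝ with λ > 0 satisfy: a(w, u) = λ⟨w, u⟩ for all w ∈ V; ⟨u, u⟩ = 1; b_h(v, v) = 1; and a_h(v, v) = μ. Then a(u − v, u − v)/λ = (μ − λ)/λ + ⟨u − v, u − v⟩ + (a(v, v) − a_h(v, v))/λ + (1 − ⟨v, v⟩). -/
open RealInnerProductSpace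

/-!
Since `a - λ b` annihilates the eigenvector `u` on both sides, its value on the diagonal at
`u - v` is its value at `v`, so `a (u - v) (u - v) - λ b (u - v) (u - v) = a v v - λ b v v`.
The relative splitting is this identity divided by `λ`, with `μ / λ` and `1` added and subtracted.
-/

theorem apply_sub_sub_of_apply_eq_zero {R S M P : Type*} [Semiring R] [Semiring S]
    [AddCommGroup M] [Module R M] [AddCommGroup P] [Module S P] [SMulCommClass S S P]
    {σ τ : R →+* S} {c : M →ₛₗ[σ] M →ₛₗ[τ] P} {u : M}
    (hleft : ∀ w, c u w = 0) (hright : ∀ w, c w u = 0) (v : M) :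
    c (u - v) (u - v) = c v v := by
  simp only [map_sub, LinearMap.sub_apply, hleft, hright, sub_zero, zero_sub, neg_neg]

theorem eigenvector_sub_energy_eq {R V : Type*} [CommRing R] [AddCommGroup V] [Module R V]
    {σ : R →+* R} {a b : V →ₛₗ[σ] V →ₗ[R] R} {u : V} {lam : R}
    (hleft : ∀ w, a u w = lam * b u w) (hright : ∀ w, a w u = lam * b w u) (v : V) :
    a (u - v) (u - v) = lam * b (u - v) (u - v) + (a v v - lam * b v v) := by
  have shifted : (a - lam • b) (u - v) (u - v) = (a - lam • b) v v :=
    apply_sub_sub_of_apply_eq_zero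
      (fun w ↦ sub_eq_zero.mpr (hleft w)) (fun w ↦ sub_eq_zero.mpr (hright w)) v
  exact sub_eq_iff_eq_add'.mp shifted

/-- The two-sided eigenvector condition also covers Hermitian forms with real `lam`, `σ` being the
conjugation. -/
theorem generalized_pythagorean_eigenvalue_theorem_relative_general
    {K V : Type*} [Field K] [AddCommGroup V] [Module K V] {σ : K →+* K}
    {a ah b : V →ₛₗ[σ] V →ₗ[K] K} {u v : V} {lam mu : K} (hlam : lam ≠ 0)
    (hleft : ∀ w, a u w = lam * b u w) (hright : ∀ w, a w u = lam * b w u)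
    (hdisc : ah v v = mu) :
    a (u - v) (u - v) / lam
      = (mu - lam) / lam + b (u - v) (u - v) + (a v v - ah v v) / lam + (1 - b v v) := by
  rw [eigenvector_sub_energy_eq hleft hright v, hdisc]
  field_simp
  ring

/-- Relative (normalized) form of the **generalized Pythagorean eigenvalue
theorem** for weak forms with modified inner products: the relative squared
energy-norm error splits into the relative eigenvalue error, the squared
`L²`-norm eigenfunction error, the relative discrete energy-norm error, and
the `L²` inner product error. -/
theorem generalized_pythagorean_eigenvalue_theorem_relative
    {V : Type*} [NormedAddCommGroup V] [InnerProductSpace ℝ V]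
    (a ah bh : LinearMap.BilinForm ℝ V)
    (hasym : ∀ x y : V, a x y = a y x)
    (hahsym : ∀ x y : V, ah x y = ah y x)
    (hbhsym : ∀ x y : V, bh x y = bh y x)
    (u v : V) (lam mu : ℝ) (hlam : 0 < lam)
    (heig : ∀ w : V, a w u = lam * ⟪w, u⟫)
    (hnorm : ⟪u, u⟫ = 1)
    (hnormh : bh v v = 1)
    (hdisc : ah v v = mu) :
    a (u - v) (u - v) / lam
      = (mu - lam) / lam + ⟪u - v, u - v⟫ + (a v v - ah v v) / lam
        + (1 - ⟪v, v⟫) :=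
  generalized_pythagorean_eigenvalue_theorem_relative_general (b := innerₗ V) hlam.ne'
    (fun w ↦ by rw [hasym, heig, innerₗ_apply_apply, real_inner_comm]) heig hdisc
end

section
/- Fix τ ∈ ℝ and define F_τ : ℝ → ℝ by F_τ(θ) = √(6(1 − cos θ)/(2 + τ + (1 − τ)·cos θ)). Then, as θ → 0, F_τ(θ) = θ + (1 − 2τ)·θ³/24 + O(θ⁵); that is, the function θ ↦ F_τ(θ) − θ − (1 − 2τ)θ³/24 is O(θ⁵) in a neighborhood of 0. -/
open Real Filter Asymptotics Topology

/-!
The square of the discrete frequency is rational in `cos θ`, so the Taylor polynomial of degree four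
of the cosine gives `(ωʰh)² = θ² + (1 - 2τ) θ⁴ / 12 + O(θ⁶)`. Up to `O(θ⁶)` the right-hand side is
the square of `p = θ + (1 - 2τ) θ³ / 24`. Since `√x - p = (x - p²) / (√x + p)` and `p` is comparable
to `θ` for small `θ > 0`, taking the square root costs exactly one power of `θ`.
-/

theorem sum_range_mul_I_pow_add_sum_range_neg_mul_I_pow (z : ℂ) (n : ℕ) :
    ∑ i ∈ Finset.range (2 * n), (z * Complex.I) ^ i / (i.factorial : ℂ)
        + ∑ i ∈ Finset.range (2 * n), (-z * Complex.I) ^ i / (i.factorial : ℂ)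
      = 2 * ∑ k ∈ Finset.range n, (-1) ^ k * z ^ (2 * k) / ((2 * k).factorial : ℂ) := by
  rw [← Finset.sum_add_distrib, Finset.mul_sum]
  induction n with
  | zero => rfl
  | succ n ih =>
    have even_term : (z * Complex.I) ^ (2 * n) = (-1) ^ n * z ^ (2 * n) := by
      rw [mul_pow, pow_mul Complex.I, Complex.I_sq, mul_comm]
    rw [mul_add_one, Finset.sum_range_succ, Finset.sum_range_succ, Finset.sum_range_succ, ih,
      neg_mul, (even_two_mul n).neg_pow, (even_two_mul n).add_one.neg_pow, even_term]
    ring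

theorem complex_cos_sub_sum_range_isBigO_pow (n : ℕ) :
    (fun z : ℂ ↦ Complex.cos z
        - ∑ k ∈ Finset.range n, (-1) ^ k * z ^ (2 * k) / ((2 * k).factorial : ℂ))
      =O[𝓝 0] (· ^ (2 * n)) := by
  have exp_comp : ∀ u : ℂ → ℂ, Continuous u → u 0 = 0 → (∀ z, ‖u z‖ = ‖z‖) →
      (fun z ↦ Complex.exp (u z) - ∑ i ∈ Finset.range (2 * n), u z ^ i / (i.factorial : ℂ))
        =O[𝓝 0] (· ^ (2 * n)) := fun u hu hu₀ hnorm ↦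
    ((Complex.exp_sub_sum_range_isBigO_pow (2 * n)).comp_tendsto (hu.tendsto' 0 0 hu₀)).trans
      (.of_norm_right (.of_bound 1 (.of_forall fun z ↦ by simp [hnorm])))
  have h := ((exp_comp (· * Complex.I) (by fun_prop) (by simp) (by simp)).add
    (exp_comp (-· * Complex.I) (by fun_prop) (by simp) (by simp))).const_mul_left (1 / 2)
  refine h.congr_left fun z ↦ ?_
  linear_combination -(1 / 2) * sum_range_mul_I_pow_add_sum_range_neg_mul_I_pow z n
    - (1 / 2) * Complex.two_cos z

theorem cos_sub_sum_range_isBigO_pow (n : ℕ) :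
    (fun x : ℝ ↦ cos x - ∑ k ∈ Finset.range n, (-1) ^ k * x ^ (2 * k) / ((2 * k).factorial : ℝ))
      =O[𝓝 0] (· ^ (2 * n)) := by
  refine .of_norm_norm <| ((complex_cos_sub_sum_range_isBigO_pow n).comp_tendsto
    (Complex.continuous_ofReal.tendsto' 0 0 rfl)).norm_norm.congr (fun x ↦ ?_) fun x ↦ ?_
  · rw [← Complex.norm_real]
    push_cast
    rfl
  · simp only [Function.comp_apply, norm_pow, Complex.norm_real]

theorem isBigO_div_sub_of_tendsto {α 𝕜 E : Type*} [NormedField 𝕜] [SeminormedAddCommGroup E]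
    {l : Filter α} {f d q : α → 𝕜} {g : α → E} {c : 𝕜} (hd : Tendsto d l (𝓝 c)) (hc : c ≠ 0)
    (h : (fun x ↦ f x - q x * d x) =O[l] g) :
    (fun x ↦ f x / d x - q x) =O[l] g := by
  have hinv : (fun x ↦ (d x)⁻¹) =O[l] fun _ ↦ (1 : ℝ) := (hd.inv₀ hc).isBigO_one ℝ
  have hprod : (fun x ↦ (f x - q x * d x) * (d x)⁻¹) =O[l] g := by
    simpa only [mul_one, isBigO_norm_right] using h.norm_right.mul hinv
  refine hprod.congr' ?_ .rfl
  filter_upwards [hd.eventually_ne hc] with x hx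
  field_simp

theorem abs_sqrt_sub_mul_le (x : ℝ) {y : ℝ} (hy : 0 ≤ y) : |√x - y| * y ≤ |x - y ^ 2| := by
  rcases le_total 0 x with hx | hx
  · calc |√x - y| * y ≤ |√x - y| * (√x + y) := by gcongr; linarith [sqrt_nonneg x]
      _ = |x - y ^ 2| := by
        rw [← abs_of_nonneg (add_nonneg (sqrt_nonneg x) hy), ← abs_mul]
        congr 1
        linear_combination sq_sqrt hx
  · rw [sqrt_eq_zero_of_nonpos hx, zero_sub, abs_neg, abs_of_nonneg hy]
    linarith [neg_le_abs (x - y ^ 2)]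

theorem isBigO_sqrt_sub_of_pos {α : Type*} {l : Filter α} {f g h : α → ℝ} (hg : ∀ᶠ x in l, 0 < g x)
    (hfg : (fun x ↦ f x - g x ^ 2) =O[l] fun x ↦ g x * h x) :
    (fun x ↦ √(f x) - g x) =O[l] h := by
  obtain ⟨C, hC⟩ := hfg.bound
  refine .of_bound C ?_
  filter_upwards [hg, hC] with x hgx hCx
  refine le_of_mul_le_mul_right ?_ hgx
  calc ‖√(f x) - g x‖ * g x ≤ ‖f x - g x ^ 2‖ := abs_sqrt_sub_mul_le (f x) hgx.le
    _ ≤ C * ‖g x * h x‖ := hCx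
    _ = C * ‖h x‖ * g x := by rw [norm_mul, norm_of_nonneg hgx.le]; ring

theorem eventually_half_lt_add_mul_cube (a : ℝ) :
    ∀ᶠ x : ℝ in 𝓝[>] 0, x / 2 < x + a * x ^ 3 := by
  have hlim : Tendsto (fun x : ℝ ↦ 1 + a * x ^ 2) (𝓝 0) (𝓝 1) :=
    Continuous.tendsto' (by fun_prop) _ _ (by simp)
  filter_upwards [nhdsWithin_le_nhds (hlim.eventually_const_lt one_half_lt_one),
    self_mem_nhdsWithin] with x hfactor hx
  calc x / 2 = x * (1 / 2) := by ring
    _ < x * (1 + a * x ^ 2) := mul_lt_mul_of_pos_left hfactor hx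
    _ = x + a * x ^ 3 := by ring

theorem isBigO_sqrt_sub_add_mul_cube {f : ℝ → ℝ} {a : ℝ}
    (hf : (fun x ↦ f x - (x ^ 2 + 2 * a * x ^ 4)) =O[𝓝[>] 0] fun x ↦ x ^ 6) :
    (fun x ↦ √(f x) - (x + a * x ^ 3)) =O[𝓝[>] 0] fun x ↦ x ^ 5 := by
  have hhalf := eventually_half_lt_add_mul_cube a
  have hpos : ∀ᶠ x : ℝ in 𝓝[>] 0, 0 < x + a * x ^ 3 := by
    filter_upwards [hhalf, self_mem_nhdsWithin] with x hx hx₀ using (half_pos hx₀).trans hx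
  have hcomparable : (fun x : ℝ ↦ x) =O[𝓝[>] 0] fun x ↦ x + a * x ^ 3 := by
    refine .of_bound 2 ?_
    filter_upwards [hhalf, hpos, self_mem_nhdsWithin] with x hx hp hx₀
    rw [norm_of_nonneg (le_of_lt hx₀), norm_of_nonneg hp.le]
    linarith
  have hsq : (fun x ↦ f x - (x + a * x ^ 3) ^ 2) =O[𝓝[>] 0] fun x ↦ x ^ 6 :=
    (hf.sub ((isBigO_refl _ _).const_mul_left (a ^ 2))).congr_left fun x ↦ by ring
  refine isBigO_sqrt_sub_of_pos hpos (hsq.trans ?_)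
  exact (hcomparable.mul (isBigO_refl (fun x : ℝ ↦ x ^ 5) _)).congr_left fun x ↦ by ring

/-- The eigenvalue `(ωʰh)²` of the blended linear scheme for the Fourier mode with normalized
wavenumber `θ = kh`. -/
noncomputable def blendedEigenvalue (τ θ : ℝ) : ℝ :=
  6 * (1 - cos θ) / (2 + τ + (1 - τ) * cos θ)

theorem blended_stiffness_sub_mul_mass_isBigO (τ : ℝ) :
    (fun θ : ℝ ↦ 6 * (1 - cos θ)
        - (θ ^ 2 + (1 - 2 * τ) / 12 * θ ^ 4) * (2 + τ + (1 - τ) * cos θ))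
      =O[𝓝 0] fun θ ↦ θ ^ 6 := by
  have bounded_mul : ∀ {r u : ℝ → ℝ}, r =O[𝓝 0] (fun θ ↦ θ ^ 6) → Continuous u →
      (fun θ ↦ r θ * u θ) =O[𝓝 0] fun θ ↦ θ ^ 6 := fun hr hu ↦ by
    simpa only [mul_one] using hr.mul (hu.continuousAt.isBigO_one ℝ)
  have cos_remainder := bounded_mul
    (u := fun θ ↦ -6 - (1 - τ) * (θ ^ 2 + (1 - 2 * τ) / 12 * θ ^ 4))
    (cos_sub_sum_range_isBigO_pow 3) (by fun_prop)
  have higher_order := bounded_mul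
    (u := fun θ ↦ (1 - τ) * ((1 - 2 * τ) / 12 * (1 / 2 - θ ^ 2 / 24) - 1 / 24))
    (isBigO_refl _ _) (by fun_prop)
  refine (cos_remainder.add higher_order).congr_left fun θ ↦ ?_
  simp only [Finset.sum_range_succ, Finset.sum_range_zero, Nat.factorial]
  push_cast
  ring

theorem blendedEigenvalue_sub_isBigO (τ : ℝ) :
    (fun θ ↦ blendedEigenvalue τ θ - (θ ^ 2 + (1 - 2 * τ) / 12 * θ ^ 4))
      =O[𝓝 0] fun θ ↦ θ ^ 6 := by
  have mass_tendsto : Tendsto (fun θ ↦ 2 + τ + (1 - τ) * cos θ) (𝓝 0) (𝓝 3) :=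
    Continuous.tendsto' (by fun_prop) _ _ (by rw [cos_zero]; ring)
  exact isBigO_div_sub_of_tendsto mass_tendsto three_ne_zero
    (blended_stiffness_sub_mul_mass_isBigO τ)

/-- Dispersion expansion for the blended linear scheme with blending parameter
`τ` (mass matrix `M_τ = τ·M_SE + (1 − τ)·M_FE`): the discrete frequency
function `F_τ(θ) = √(6(1 − cos θ)/(2 + τ + (1 − τ)cos θ))` satisfies
`F_τ(θ) = θ + (1 − 2τ)θ³/24 + O(θ⁵)` as `θ → 0`; for `τ = 0` and `τ = 1` this
reduces to the finite element and spectral element expansions, respectively. -/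
theorem blended_linear_dispersion_expansion (τ : ℝ) :
    (fun θ : ℝ =>
        Real.sqrt (6 * (1 - Real.cos θ) / (2 + τ + (1 - τ) * Real.cos θ))
          - θ - (1 - 2 * τ) * θ ^ 3 / 24)
      =O[𝓝[>] (0 : ℝ)] fun θ : ℝ => θ ^ 5 := by
  have eigenvalue_expansion : (fun θ ↦ blendedEigenvalue τ θ
      - (θ ^ 2 + 2 * ((1 - 2 * τ) / 24) * θ ^ 4)) =O[𝓝[>] 0] fun θ ↦ θ ^ 6 :=
    ((blendedEigenvalue_sub_isBigO τ).mono nhdsWithin_le_nhds).congr_left fun θ ↦ by ring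
  refine (isBigO_sqrt_sub_add_mul_cube eigenvalue_expansion).congr_left fun θ ↦ ?_
  rw [blendedEigenvalue]
  ring
end

section
/- Define m : ℝ → ℝ by m(θ) = (2/3)·(27 + 20cos θ + cos 2θ)/48 + (1/3)·(33 + 26cos θ + cos 2θ)/60, k(θ) = (3 − 2cos θ − cos 2θ)/3, and G(θ) = √(k(θ)/m(θ)). Then, as θ → 0, G(θ) − θ = O(θ⁷); that is, the optimally-blended C¹ quadratic isogeometric scheme with Lobatto-to-Gauss blending ratio 2 : 1 (blending parameter τ = 2/3) has phase error of order θ⁷, two orders better than the order-θ⁵ phase errors of the Gauss-integrated and Lobatto-integrated schemes individually. -/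
open Real Filter Asymptotics Topology

/-!
The error `√(k/m) - θ` is controlled by the residual of `k = θ² m`. Taylor expansion of the symbols
gives `k = θ² - θ⁴/4 + 11θ⁶/360 + O(θ⁸)` and `m_τ = 1 - θ²/4 + (7/240 + τ/480)θ⁴ + O(θ⁶)`, so that
`k/m_τ = θ² + (2 - 3τ)θ⁶/1440 + O(θ⁸)`; taking the square root divides the error by `2θ`. The
leading term `(2 - 3τ)θ⁵/2880` of the phase error vanishes exactly for the blend `τ = 2/3`.
-/

section ErrorTransfer

variable {α 𝕜 E : Type*} [NormedDivisionRing 𝕜] [Norm E] {l : Filter α} {c : 𝕜}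

theorem isBigO_mul_of_tendsto {f g : α → 𝕜} {h : α → E} (hf : f =O[l] h)
    (hg : Tendsto g l (𝓝 c)) :
    (fun x => f x * g x) =O[l] h := by
  have hfg : (fun x => f x * g x) =O[l] fun x => f x * 1 :=
    (isBigO_refl f l).mul (hg.isBigO_one 𝕜)
  simp only [mul_one] at hfg
  exact hfg.trans hf

theorem isBigO_self_mul_of_tendsto (f : α → 𝕜) {g : α → 𝕜} (hg : Tendsto g l (𝓝 c))
    (hc : c ≠ 0) : f =O[l] fun x => f x * g x := by
  refine (isBigO_mul_of_tendsto (isBigO_refl _ _) (hg.inv₀ hc)).congr' ?_ .rfl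
  filter_upwards [hg.eventually_ne hc] with x hx
  exact mul_inv_cancel_right₀ hx _

theorem isBigO_div_sub {f g m : α → 𝕜} {h : α → E} (hm : Tendsto m l (𝓝 c)) (hc : c ≠ 0)
    (hf : (fun x => f x - g x * m x) =O[l] h) :
    (fun x => f x / m x - g x) =O[l] h := by
  refine (isBigO_mul_of_tendsto hf (hm.inv₀ hc)).congr' ?_ .rfl
  filter_upwards [hm.eventually_ne hc] with x hx
  rw [sub_mul, mul_inv_cancel_right₀ hx, div_eq_mul_inv]

theorem abs_sqrt_sub_mul_le_s18 {a b : ℝ} (hb : 0 ≤ b) : |√a - b| * b ≤ |a - b ^ 2| := by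
  rcases le_total 0 a with ha | ha
  · calc |√a - b| * b ≤ |√a - b| * (√a + b) := by gcongr; linarith [sqrt_nonneg a]
      _ = |(√a - b) * (√a + b)| := by rw [abs_mul, abs_of_nonneg (add_nonneg (sqrt_nonneg a) hb)]
      _ = |a - b ^ 2| := by rw [mul_comm, ← sq_sub_sq, sq_sqrt ha]
  · calc |√a - b| * b = b ^ 2 := by
          rw [sqrt_eq_zero_of_nonpos ha, zero_sub, abs_neg, abs_of_nonneg hb, sq]
      _ ≤ b ^ 2 - a := (le_sub_self_iff _).2 ha
      _ ≤ |a - b ^ 2| := abs_sub_comm a (b ^ 2) ▸ le_abs_self _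

theorem isBigO_sqrt_sub {f g h : α → ℝ} (hg : ∀ᶠ x in l, 0 < g x)
    (hf : (fun x => f x - g x ^ 2) =O[l] fun x => g x * h x) :
    (fun x => √(f x) - g x) =O[l] h := by
  have hg₀ : ∀ᶠ x in l, g x ≠ 0 := hg.mono fun _ hx => hx.ne'
  have hmul : (fun x => g x * (√(f x) - g x)) =O[l] fun x => g x * h x := by
    refine IsBigO.trans (IsBigO.of_bound' (hg.mono fun x hx => ?_)) hf
    rw [norm_mul, Real.norm_of_nonneg hx.le, mul_comm]
    exact abs_sqrt_sub_mul_le_s18 hx.le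
  refine ((isBigO_mul_iff_isBigO_div hg₀).1 hmul).congr' .rfl (hg₀.mono fun x hx => ?_)
  exact mul_div_cancel_left₀ _ hx

end ErrorTransfer

section CosTaylor

open scoped Nat

/-- The sum of the first `n` nonzero terms of the Taylor series of `cos` at `0`, to which the
Fourier symbols are compared. Only even powers are indexed, so the remainder is `O(x ^ (2 * n))`. -/
noncomputable def cosTaylor (n : ℕ) (x : ℝ) : ℝ :=
  ∑ i ∈ Finset.range n, (-1) ^ i * x ^ (2 * i) / (2 * i)!

theorem taylorWithinEval_cos_two_mul (n : ℕ) (x : ℝ) :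
    taylorWithinEval cos (2 * n) Set.univ 0 x = cosTaylor (n + 1) x := by
  induction n with
  | zero => simp [cosTaylor]
  | succ n ih =>
    have hodd : iteratedDeriv (2 * n + 1) cos 0 = 0 := by simp
    have heven : iteratedDeriv (2 * (n + 1)) cos 0 = (-1) ^ (n + 1) := by
      simp [iteratedDeriv_even_cos]
    rw [cosTaylor, Finset.sum_range_succ, ← cosTaylor, ← ih, ← heven]
    rw [show 2 * (n + 1) = 2 * n + 1 + 1 by ring, taylorWithinEval_succ, taylorWithinEval_succ,
      iteratedDerivWithin_univ, iteratedDerivWithin_univ, hodd, Nat.factorial_succ (2 * n + 1)]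
    push_cast [smul_eq_mul]
    ring

theorem isBigO_cos_sub_cosTaylor (n : ℕ) :
    (fun x => cos x - cosTaylor n x) =O[𝓝 0] fun x => x ^ (2 * n) := by
  have hsucc : (fun x => cos x - cosTaylor (n + 1) x) =O[𝓝 0] fun x => x ^ (2 * n) := by
    simpa only [taylorWithinEval_cos_two_mul, sub_zero] using
      (taylor_isLittleO_univ (x₀ := 0) (n := 2 * n) contDiff_cos).isBigO
  have hterm : (fun x : ℝ => (-1) ^ n * x ^ (2 * n) / (2 * n)!) =O[𝓝 0] fun x => x ^ (2 * n) := by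
    simpa only [mul_div_right_comm] using isBigO_const_mul_self ((-1) ^ n / ((2 * n)! : ℝ)) _ _
  refine (hsucc.add hterm).congr_left fun x => ?_
  rw [cosTaylor, Finset.sum_range_succ, ← cosTaylor]
  ring

theorem isBigO_cos_const_mul_sub_cosTaylor (n : ℕ) (c : ℝ) :
    (fun x => cos (c * x) - cosTaylor n (c * x)) =O[𝓝 0] fun x => x ^ (2 * n) := by
  have hc : Tendsto (fun x => c * x) (𝓝 0) (𝓝 0) :=
    Continuous.tendsto' (by fun_prop) _ _ (mul_zero c)
  refine ((isBigO_cos_sub_cosTaylor n).comp_tendsto hc).trans ?_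
  simpa only [Function.comp_def, mul_pow] using isBigO_const_mul_self (c ^ (2 * n)) _ _

theorem isBigO_trigPoly_sub_cosTaylor (n : ℕ) (a b c : ℝ) :
    (fun θ => (a + b * cos θ + c * cos (2 * θ)) -
        (a + b * cosTaylor n θ + c * cosTaylor n (2 * θ))) =O[𝓝 0] fun θ => θ ^ (2 * n) := by
  refine (((isBigO_cos_sub_cosTaylor n).const_mul_left b).add
    ((isBigO_cos_const_mul_sub_cosTaylor n 2).const_mul_left c)).congr_left fun θ => ?_
  ring

end CosTaylor

section Symbols

/-- Fourier symbol of the stiffness matrix of `C¹` quadratic B-splines, multiplied by the mesh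
size `h`; here and below `θ = kh` is the normalized wavenumber. -/
noncomputable def stiffnessSymbol (θ : ℝ) : ℝ := (3 - 2 * cos θ - cos (2 * θ)) / 3

/-- Fourier symbol, divided by the mesh size, of the exactly (Gauss) integrated mass matrix. -/
noncomputable def gaussMassSymbol (θ : ℝ) : ℝ := (33 + 26 * cos θ + cos (2 * θ)) / 60

/-- Fourier symbol, divided by the mesh size, of the mass matrix integrated with the 3-point
Gauss–Lobatto–Legendre rule. -/
noncomputable def lobattoMassSymbol (θ : ℝ) : ℝ := (27 + 20 * cos θ + cos (2 * θ)) / 48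

/-- Fourier symbol of the blended mass matrix `M_τ`; `τ = 0` is the Gauss rule and `τ = 1` the
Lobatto rule. -/
noncomputable def blendedMassSymbol (τ θ : ℝ) : ℝ :=
  τ * lobattoMassSymbol θ + (1 - τ) * gaussMassSymbol θ

/-- The discrete frequency `ωʰh` of the scheme with blending parameter `τ`, as a function of the
normalized wavenumber. -/
noncomputable def discreteFrequency (τ θ : ℝ) : ℝ :=
  √(stiffnessSymbol θ / blendedMassSymbol τ θ)

theorem isBigO_stiffnessSymbol_sub_taylor :
    (fun θ => stiffnessSymbol θ - (θ ^ 2 - θ ^ 4 / 4 + 11 / 360 * θ ^ 6)) =O[𝓝 0]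
      fun θ => θ ^ 8 := by
  refine (isBigO_trigPoly_sub_cosTaylor 4 1 (-2 / 3) (-1 / 3)).congr_left fun θ => ?_
  simp only [stiffnessSymbol, cosTaylor, Finset.sum_range_succ, Finset.sum_range_zero,
    Nat.factorial]
  push_cast
  ring

theorem isBigO_gaussMassSymbol_sub_taylor :
    (fun θ => gaussMassSymbol θ - (1 - θ ^ 2 / 4 + 7 / 240 * θ ^ 4)) =O[𝓝 0] fun θ => θ ^ 6 := by
  refine (isBigO_trigPoly_sub_cosTaylor 3 (33 / 60) (26 / 60) (1 / 60)).congr_left fun θ => ?_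
  simp only [gaussMassSymbol, cosTaylor, Finset.sum_range_succ, Finset.sum_range_zero,
    Nat.factorial]
  push_cast
  ring

theorem isBigO_lobattoMassSymbol_sub_taylor :
    (fun θ => lobattoMassSymbol θ - (1 - θ ^ 2 / 4 + θ ^ 4 / 32)) =O[𝓝 0] fun θ => θ ^ 6 := by
  refine (isBigO_trigPoly_sub_cosTaylor 3 (27 / 48) (20 / 48) (1 / 48)).congr_left fun θ => ?_
  simp only [lobattoMassSymbol, cosTaylor, Finset.sum_range_succ, Finset.sum_range_zero,
    Nat.factorial]
  push_cast
  ring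

variable (τ : ℝ)

theorem isBigO_blendedMassSymbol_sub_taylor :
    (fun θ => blendedMassSymbol τ θ - (1 - θ ^ 2 / 4 + (7 / 240 + τ / 480) * θ ^ 4)) =O[𝓝 0]
      fun θ => θ ^ 6 := by
  refine ((isBigO_lobattoMassSymbol_sub_taylor.const_mul_left τ).add
    (isBigO_gaussMassSymbol_sub_taylor.const_mul_left (1 - τ))).congr_left fun θ => ?_
  rw [blendedMassSymbol]
  ring

theorem tendsto_blendedMassSymbol_zero : Tendsto (blendedMassSymbol τ) (𝓝 0) (𝓝 1) := by
  unfold blendedMassSymbol lobattoMassSymbol gaussMassSymbol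
  exact Continuous.tendsto' (by fun_prop) _ _ (by norm_num)

theorem isBigO_stiffnessSymbol_sub_mul_blendedMassSymbol :
    (fun θ => stiffnessSymbol θ - (θ ^ 2 + (2 - 3 * τ) / 1440 * θ ^ 6) * blendedMassSymbol τ θ)
      =O[𝓝 0] fun θ => θ ^ 8 := by
  have hrem : (fun θ => θ ^ 8 * ((2 - 3 * τ) / 1440 * (1 / 4 - (7 / 240 + τ / 480) * θ ^ 2)))
      =O[𝓝 0] fun θ => θ ^ 8 :=
    isBigO_mul_of_tendsto (isBigO_refl _ _) (Continuous.tendsto (by fun_prop) 0)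
  have hmass : (fun θ => θ ^ 2 * (blendedMassSymbol τ θ -
      (1 - θ ^ 2 / 4 + (7 / 240 + τ / 480) * θ ^ 4)) * (1 + (2 - 3 * τ) / 1440 * θ ^ 4)) =O[𝓝 0]
      fun θ => θ ^ 8 := by
    refine isBigO_mul_of_tendsto ?_ (Continuous.tendsto (by fun_prop) 0)
    exact ((isBigO_refl _ _).mul (isBigO_blendedMassSymbol_sub_taylor τ)).congr_right
      fun θ => by ring
  refine ((isBigO_stiffnessSymbol_sub_taylor.sub hmass).add hrem).congr_left fun θ => ?_
  ring

theorem isBigO_stiffnessSymbol_div_blendedMassSymbol_sub_taylor :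
    (fun θ => stiffnessSymbol θ / blendedMassSymbol τ θ - (θ ^ 2 + (2 - 3 * τ) / 1440 * θ ^ 6))
      =O[𝓝 0] fun θ => θ ^ 8 :=
  isBigO_div_sub (tendsto_blendedMassSymbol_zero τ) one_ne_zero
    (isBigO_stiffnessSymbol_sub_mul_blendedMassSymbol τ)

theorem isBigO_stiffnessSymbol_div_blendedMassSymbol_sub_sq :
    (fun θ => stiffnessSymbol θ / blendedMassSymbol τ θ -
        (θ + (2 - 3 * τ) / 2880 * θ ^ 5) ^ 2) =O[𝓝 0] fun θ => θ ^ 8 := by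
  have hrem : (fun θ : ℝ => θ ^ 8 * (((2 - 3 * τ) / 2880) ^ 2 * θ ^ 2)) =O[𝓝 0] fun θ => θ ^ 8 :=
    isBigO_mul_of_tendsto (isBigO_refl _ _) (Continuous.tendsto (by fun_prop) 0)
  refine ((isBigO_stiffnessSymbol_div_blendedMassSymbol_sub_taylor τ).sub hrem).congr_left
    fun θ => ?_
  ring

end Symbols

theorem iga_quadratic_optimal_blending_superconvergence_general (τ : ℝ) :
    (fun θ => discreteFrequency τ θ - (θ + (2 - 3 * τ) / 2880 * θ ^ 5)) =O[𝓝[>] 0]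
      fun θ => θ ^ 7 := by
  have hfactor : Tendsto (fun θ => 1 + (2 - 3 * τ) / 2880 * θ ^ 4) (𝓝 0) (𝓝 1) :=
    Continuous.tendsto' (by fun_prop) _ _ (by simp)
  have hpos : ∀ᶠ θ in 𝓝[>] 0, 0 < θ + (2 - 3 * τ) / 2880 * θ ^ 5 := by
    filter_upwards [self_mem_nhdsWithin, nhdsWithin_le_nhds (hfactor.eventually_const_lt one_pos)]
      with θ hθ hfactor_pos
    linear_combination mul_pos (Set.mem_Ioi.1 hθ) hfactor_pos
  have hpow : (fun θ => θ ^ 8) =O[𝓝 0]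
      fun θ => (θ + (2 - 3 * τ) / 2880 * θ ^ 5) * θ ^ 7 :=
    (isBigO_self_mul_of_tendsto _ hfactor one_ne_zero).congr_right fun θ => by ring
  exact isBigO_sqrt_sub hpos <|
    ((isBigO_stiffnessSymbol_div_blendedMassSymbol_sub_sq τ).trans hpow).mono nhdsWithin_le_nhds

/-- Superconvergence of the optimally-blended `C¹` quadratic isogeometric
scheme with Lobatto-to-Gauss blending ratio `2 : 1` (blending parameter
`τ = 2/3`): with mass symbol
`m(θ) = (2/3)(27 + 20cos θ + cos 2θ)/48 + (1/3)(33 + 26cos θ + cos 2θ)/60`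
and stiffness symbol `k(θ) = (3 − 2cos θ − cos 2θ)/3`, the discrete frequency
function `G(θ) = √(k(θ)/m(θ))` satisfies `G(θ) − θ = O(θ⁷)` as `θ → 0`, two
orders better than the `O(θ⁵)` phase errors of the Gauss-integrated and
Lobatto-integrated schemes individually. -/
theorem iga_quadratic_optimal_blending_superconvergence :
    (fun θ : ℝ =>
        Real.sqrt (((3 - 2 * Real.cos θ - Real.cos (2 * θ)) / 3)
            / ((2 / 3) * (27 + 20 * Real.cos θ + Real.cos (2 * θ)) / 48
                + (1 / 3) * (33 + 26 * Real.cos θ + Real.cos (2 * θ)) / 60))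
          - θ)
      =O[𝓝[>] (0 : ℝ)] fun θ : ℝ => θ ^ 7 := by
  refine (iga_quadratic_optimal_blending_superconvergence_general (2 / 3)).congr_left fun θ => ?_
  simp only [discreteFrequency, stiffnessSymbol, blendedMassSymbol, lobattoMassSymbol,
    gaussMassSymbol]
  ring_nf
end
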